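/- arXiv:2406.01051 — 2 statements merged into one kernel-verified Lean document; each statement's English description precedes it below -/
import Mathlib

section
/- Let L be a line in P^2, let p_2, p_3, p_4 be three distinct points of L, and let p_1 be a point not on L. Let Z = 2p_1 + p_2 + p_3 + p_4 be the fat points scheme with a double point at p_1 and simple points at p_2, p_3, p_4. Then the Waldschmidt constant of I(Z) equals 7/3. -/
noncomputable section

open MvPolynomial

/-- `alpha J` is the least degree of a nonzero homogeneous form in the ideal `J`. -/
def alpha {kk : Type*} [Field kk] {σ : Type*} (J : Ideal (MvPolynomial σ kk)) : ℕ :=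
  sInf {d : ℕ | ∃ f ∈ J, f ≠ 0 ∧ MvPolynomial.IsHomogeneous f d}

/-- The homogeneous (prime) ideal of the point of `ℙ²` represented by the nonzero vector
`p`, generated by the linear forms vanishing at `p`. -/
def pointIdeal {kk : Type*} [Field kk] (p : Fin 3 → kk) : Ideal (MvPolynomial (Fin 3) kk) :=
  Ideal.span {f | f.IsHomogeneous 1 ∧ MvPolynomial.eval p f = 0}

/-- Two nonzero vectors represent the same point of `ℙ²`. -/
def projEq {kk : Type*} [Field kk] (p q : Fin 3 → kk) : Prop :=
  ∃ c : kk, c ≠ 0 ∧ q = c • p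

/-!
Choose coordinates in which `p = [1 : 0 : 0]` and the line is `x₀ = 0`, and expand a form of
degree `d` as a polynomial in `x₀`. A nonzero coefficient of `x₀ ^ j` is a binary form of degree
`d - j`. Multiplicity `a` at `p` forces `a ≤ d - j`, and multiplicity `b` at each of `n` points of
the line makes the coefficient divisible by the `(b - j)`-th powers of `n` pairwise coprime linear
forms, so `n * (b - j) ≤ d - j`. Eliminating `j` gives `n * (a + b) ≤ n * d + a`. For `a = m * n`,
`b = n` and `m ≤ n` equality holds for the product of the `(n - m)`-th power of the line and the
`m`-th powers of the `n` lines joining `p` to the other points.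
-/

section LinearForm

variable {σ R : Type*} [Fintype σ] [CommRing R]

/-- The linear form `∑ i, c i • X i`, depending linearly on its coefficient vector `c`. -/
def linearForm : (σ → R) →ₗ[R] MvPolynomial σ R :=
  Fintype.linearCombination R X

lemma linearForm_apply (c : σ → R) : linearForm c = ∑ i, C (c i) * X i := by
  simp [linearForm, Fintype.linearCombination_apply, smul_eq_C_mul]

lemma isHomogeneous_linearForm (c : σ → R) : (linearForm c).IsHomogeneous 1 := by
  rw [linearForm_apply]
  exact IsHomogeneous.sum _ _ _ fun i _ => isHomogeneous_C_mul_X (c i) i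

lemma eval_linearForm (c v : σ → R) : eval v (linearForm c) = c ⬝ᵥ v := by
  simp [linearForm_apply, dotProduct]

lemma linearForm_injective : Function.Injective (linearForm : (σ → R) →ₗ[R] MvPolynomial σ R) := by
  intro c c' h
  refine dotProduct_eq _ _ fun v => ?_
  rw [← eval_linearForm, h, eval_linearForm]

lemma exists_linearForm_eq {f : MvPolynomial σ R} (hf : f.IsHomogeneous 1) :
    ∃ c : σ → R, linearForm c = f := by
  have hspan : f ∈ homogeneousSubmodule σ R 1 := hf
  rwa [homogeneousSubmodule_one_eq_span_X, ← Fintype.range_linearCombination R X] at hspan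

lemma linearForm_mem_idealOfVars (c : σ → R) : linearForm c ∈ idealOfVars σ R := by
  rw [linearForm_apply]
  exact Ideal.sum_mem _ fun i _ => Ideal.mul_mem_left _ _ (Ideal.subset_span ⟨i, rfl⟩)

lemma finSuccEquiv_linearForm {n : ℕ} (c : Fin (n + 1) → R) :
    finSuccEquiv R n (linearForm c) =
      Polynomial.C (C (c 0)) * Polynomial.X + Polynomial.C (linearForm (Fin.tail c)) := by
  have hC (a : R) : finSuccEquiv R n (C a) = Polynomial.C (C a) := by simp [finSuccEquiv_apply]
  simp [linearForm_apply, Fin.sum_univ_succ, Fin.tail, finSuccEquiv_X_zero, finSuccEquiv_X_succ, hC]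

lemma isRelPrime_linearForm {K : Type*} [Field K] {c c' : σ → K}
    (h : LinearIndependent K ![c, c']) : IsRelPrime (linearForm c) (linearForm c') := by
  rintro D ⟨u, hu⟩ ⟨u', hu'⟩
  have hne : linearForm c ≠ 0 := (map_ne_zero_iff _ linearForm_injective).mpr (h.ne_zero 0)
  have hne' : linearForm c' ≠ 0 := (map_ne_zero_iff _ linearForm_injective).mpr (h.ne_zero 1)
  have hdeg := (isHomogeneous_linearForm c).totalDegree hne
  have hdeg' := (isHomogeneous_linearForm c').totalDegree hne'
  rw [hu] at hne hdeg
  rw [hu'] at hne' hdeg'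
  have hD : D ≠ 0 := left_ne_zero_of_mul hne
  rw [totalDegree_mul_of_isDomain hD (right_ne_zero_of_mul hne)] at hdeg
  rw [totalDegree_mul_of_isDomain hD (right_ne_zero_of_mul hne')] at hdeg'
  rcases Nat.eq_zero_or_pos D.totalDegree with hD0 | hDpos
  · rw [totalDegree_eq_zero_iff_eq_C.mp hD0] at hD ⊢
    exact (isUnit_iff_ne_zero.mpr (C_ne_zero.mp hD)).map C
  · obtain ⟨a, rfl⟩ : ∃ a, u = C a := ⟨_, totalDegree_eq_zero_iff_eq_C.mp (by omega)⟩
    obtain ⟨a', rfl⟩ : ∃ a', u' = C a' := ⟨_, totalDegree_eq_zero_iff_eq_C.mp (by omega)⟩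
    have hdep : a' • c + (-a) • c' = 0 := by
      apply linearForm_injective
      simp only [map_add, map_smul, hu, hu', map_zero, smul_eq_C_mul, map_neg]
      ring
    have ha' : a' = 0 := (LinearIndependent.pair_iff.mp h _ _ hdep).1
    simp [ha'] at hne'

end LinearForm

section HomogeneousDegree

variable {σ : Type*}

lemma sum_le_of_isRelPrime_of_dvd {K ι : Type*} [Field K] {s : Finset ι} {F : ι → MvPolynomial σ K}
    {e : ι → ℕ} {g : MvPolynomial σ K} {d : ℕ} (hF : ∀ i ∈ s, (F i).IsHomogeneous (e i))
    (hrel : (s : Set ι).Pairwise fun i j => IsRelPrime (F i) (F j)) (hdvd : ∀ i ∈ s, F i ∣ g)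
    (hg0 : g ≠ 0) (hg : g.IsHomogeneous d) : ∑ i ∈ s, e i ≤ d := by
  have hprod : ∏ i ∈ s, F i ∣ g := Finset.prod_dvd_of_isRelPrime hrel hdvd
  have hprod0 : ∏ i ∈ s, F i ≠ 0 := ne_zero_of_dvd_ne_zero hg0 hprod
  rw [← (IsHomogeneous.prod s F e hF).totalDegree hprod0, ← hg.totalDegree hg0]
  exact totalDegree_le_of_dvd_of_isDomain hprod hg0

lemma le_of_mem_idealOfVars_pow {R : Type*} [CommRing R] {g : MvPolynomial σ R} {n d : ℕ}
    (hmem : g ∈ idealOfVars σ R ^ n) (hg0 : g ≠ 0) (hg : g.IsHomogeneous d) : n ≤ d := by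
  obtain ⟨x, hx⟩ := ne_zero_iff.mp hg0
  calc n ≤ x.degree := (mem_pow_idealOfVars_iff n g).mp hmem x (mem_support_iff.mpr hx)
    _ = d := (Finsupp.degree_eq_weight_one (R := ℕ) ▸ hg hx :)

end HomogeneousDegree

lemma pow_dvd_coeff_of_mem_span_X_C_pow {A : Type*} [CommRing A] {l : A} {n : ℕ}
    {g : Polynomial A}
    (hg : g ∈ (Ideal.span {Polynomial.X, Polynomial.C l} : Ideal (Polynomial A)) ^ n) (j : ℕ) :
    l ^ (n - j) ∣ g.coeff j := by
  induction n generalizing g j with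
  | zero => simp
  | succ n ih =>
    rw [pow_succ] at hg
    induction hg using Submodule.mul_induction_on' with
    | add a _ b _ ha hb =>
      rw [Polynomial.coeff_add]
      exact dvd_add ha hb
    | mem_mul_mem a ha b hb =>
      obtain ⟨u, v, rfl⟩ := Ideal.mem_span_pair.mp hb
      rw [mul_add, ← mul_assoc, ← mul_assoc, Polynomial.coeff_add, Polynomial.coeff_mul_C]
      apply dvd_add
      · cases j with
        | zero => simp
        | succ j =>
          rw [Polynomial.coeff_mul_X, Nat.add_sub_add_right]
          exact ih (Ideal.mul_mem_right u _ ha) j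
      · calc l ^ (n + 1 - j) ∣ l ^ (n - j) * l := by
              rw [← pow_succ]
              exact pow_dvd_pow l (by omega)
          _ ∣ (a * v).coeff j * l := mul_dvd_mul_right (ih (Ideal.mul_mem_right v _ ha) j) l

section LinearSubst

variable {σ τ R : Type*} [Fintype σ] [DecidableEq σ] [CommRing R]

/-- Pullback of polynomials along a linear map `φ`, that is, `f ↦ f ∘ φ` on polynomial
functions. -/
def linearSubst (φ : (σ → R) →ₗ[R] (τ → R)) : MvPolynomial τ R →ₐ[R] MvPolynomial σ R :=
  bind₁ (LinearMap.toMatrix' φ).toMvPolynomial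

lemma eval_linearSubst (φ : (σ → R) →ₗ[R] (τ → R)) (f : MvPolynomial τ R) (v : σ → R) :
    eval v (linearSubst φ f) = eval (φ v) f := by
  have hφ : (fun i => eval v ((LinearMap.toMatrix' φ).toMvPolynomial i)) = φ v := by
    ext i
    rw [Matrix.toMvPolynomial_eval_eq_apply, LinearMap.toMatrix'_mulVec]
  rw [← hφ]
  exact eval₂Hom_bind₁ (RingHom.id R) v _ f

lemma isHomogeneous_linearSubst (φ : (σ → R) →ₗ[R] (τ → R)) {f : MvPolynomial τ R} {d : ℕ}
    (hf : f.IsHomogeneous d) : (linearSubst φ f).IsHomogeneous d := by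
  have h := hf.aeval _ (Matrix.toMvPolynomial_isHomogeneous (LinearMap.toMatrix' φ))
  rwa [one_mul] at h

lemma linearSubst_injective [Finite τ] (e : (σ → R) ≃ₗ[R] (τ → R)) :
    Function.Injective (linearSubst e.toLinearMap) := by
  classical
  cases nonempty_fintype τ
  have hinv : (linearSubst e.symm.toLinearMap).comp (linearSubst e.toLinearMap) =
      AlgHom.id R _ := by
    refine algHom_ext fun i => ?_
    simp [linearSubst, ← Matrix.toMvPolynomial_mul, ← LinearMap.toMatrix'_comp]
  have hleft : Function.LeftInverse (linearSubst e.symm.toLinearMap) (linearSubst e.toLinearMap) :=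
    DFunLike.congr_fun hinv
  exact hleft.injective

end LinearSubst

section BinaryForm

variable {K : Type*} [Field K]

/-- The binary linear form whose zero in `ℙ¹` is the point represented by `w`. -/
def vanishingForm (w : Fin 2 → K) : MvPolynomial (Fin 2) K :=
  linearForm ![w 1, -w 0]

lemma vanishingForm_dvd_linearForm {w c : Fin 2 → K} (hw : w ≠ 0) (hc : c ⬝ᵥ w = 0) :
    vanishingForm w ∣ linearForm c := by
  rw [dotProduct, Fin.sum_univ_two] at hc
  suffices ∃ t : K, c = t • ![w 1, -w 0] by
    obtain ⟨t, rfl⟩ := this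
    rw [map_smul, smul_eq_C_mul]
    exact dvd_mul_left _ _
  have hw' : w 0 ≠ 0 ∨ w 1 ≠ 0 := by
    rw [← Fin.exists_fin_two (p := fun i => w i ≠ 0)]
    exact Function.ne_iff.mp hw
  rcases hw' with hw₀ | hw₁
  · refine ⟨-(c 1 / w 0), funext (Fin.forall_fin_two.mpr ⟨?_, ?_⟩)⟩
    · change c 0 = -(c 1 / w 0) * w 1
      field_simp
      linear_combination hc
    · change c 1 = -(c 1 / w 0) * -w 0
      field_simp
  · refine ⟨c 0 / w 1, funext (Fin.forall_fin_two.mpr ⟨?_, ?_⟩)⟩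
    · change c 0 = c 0 / w 1 * w 1
      field_simp
    · change c 1 = c 0 / w 1 * -w 0
      field_simp
      linear_combination hc

lemma isRelPrime_vanishingForm {w w' : Fin 2 → K} (h : LinearIndependent K ![w, w']) :
    IsRelPrime (vanishingForm w) (vanishingForm w') := by
  apply isRelPrime_linearForm
  rw [LinearIndependent.pair_iff] at h ⊢
  intro s t hst
  have h₀ : s * w 1 + t * w' 1 = 0 := congrFun hst 0
  have h₁ : s * -w 0 + t * -w' 0 = 0 := congrFun hst 1
  refine h s t (funext (Fin.forall_fin_two.mpr ⟨?_, h₀⟩))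
  change s * w 0 + t * w' 0 = 0
  linear_combination -h₁

end BinaryForm

section PointIdeal

variable {K : Type*} [Field K]

lemma linearForm_mem_pointIdeal {c p : Fin 3 → K} (h : c ⬝ᵥ p = 0) :
    linearForm c ∈ pointIdeal p :=
  Ideal.subset_span ⟨isHomogeneous_linearForm c, by rwa [eval_linearForm]⟩

lemma map_mem_pow_of_mem_pointIdeal_pow {A : Type*} [CommRing A]
    {ψ : MvPolynomial (Fin 3) K →+* A} {p : Fin 3 → K} {J : Ideal A}
    (h : ∀ c : Fin 3 → K, c ⬝ᵥ p = 0 → ψ (linearForm c) ∈ J)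
    {f : MvPolynomial (Fin 3) K} {n : ℕ} (hf : f ∈ pointIdeal p ^ n) : ψ f ∈ J ^ n := by
  have hle : (pointIdeal p).map ψ ≤ J := by
    rw [pointIdeal, Ideal.map_span, Ideal.span_le]
    rintro _ ⟨g, ⟨hg, hgp⟩, rfl⟩
    obtain ⟨c, rfl⟩ := exists_linearForm_eq hg
    exact h c (eval_linearForm c p ▸ hgp)
  have hmem := Ideal.mem_map_of_mem ψ hf
  rw [Ideal.map_pow] at hmem
  exact Ideal.pow_right_mono hle n hmem

lemma linearSubst_mem_pointIdeal_pow {φ : (Fin 3 → K) →ₗ[K] (Fin 3 → K)} {p : Fin 3 → K}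
    {f : MvPolynomial (Fin 3) K} {n : ℕ} (hf : f ∈ pointIdeal (φ p) ^ n) :
    linearSubst φ f ∈ pointIdeal p ^ n := by
  refine map_mem_pow_of_mem_pointIdeal_pow (ψ := (linearSubst φ).toRingHom) (fun c hc => ?_) hf
  refine Ideal.subset_span ⟨isHomogeneous_linearSubst φ (isHomogeneous_linearForm c), ?_⟩
  exact (eval_linearSubst φ _ p).trans ((eval_linearForm c _).trans hc)

lemma coeff_finSuccEquiv_mem_idealOfVars_pow {f : MvPolynomial (Fin 3) K} {n : ℕ}
    (hf : f ∈ pointIdeal (Pi.single 0 1) ^ n) (j : ℕ) :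
    (finSuccEquiv K 2 f).coeff j ∈ idealOfVars (Fin 2) K ^ n := by
  have hmem : finSuccEquiv K 2 f ∈ (idealOfVars (Fin 2) K).map Polynomial.C ^ n := by
    refine map_mem_pow_of_mem_pointIdeal_pow (ψ := (finSuccEquiv K 2).toRingHom) (fun c hc => ?_) hf
    rw [dotProduct_single_one] at hc
    change finSuccEquiv K 2 (linearForm c) ∈ _
    rw [finSuccEquiv_linearForm, hc, map_zero, map_zero, zero_mul, zero_add]
    exact Ideal.mem_map_of_mem _ (linearForm_mem_idealOfVars _)
  rw [← Ideal.map_pow, Ideal.mem_map_C_iff] at hmem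
  exact hmem j

lemma vanishingForm_pow_dvd_coeff_finSuccEquiv {w : Fin 2 → K} (hw : w ≠ 0)
    {f : MvPolynomial (Fin 3) K} {n : ℕ} (hf : f ∈ pointIdeal (Fin.cons 0 w) ^ n) (j : ℕ) :
    vanishingForm w ^ (n - j) ∣ (finSuccEquiv K 2 f).coeff j := by
  refine pow_dvd_coeff_of_mem_span_X_C_pow ?_ j
  refine map_mem_pow_of_mem_pointIdeal_pow (ψ := (finSuccEquiv K 2).toRingHom) (fun c hc => ?_) hf
  have htail : Fin.tail c ⬝ᵥ w = 0 := by
    simpa [dotProduct, Fin.sum_univ_succ, Fin.tail] using hc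
  obtain ⟨u, hu⟩ := vanishingForm_dvd_linearForm hw htail
  change finSuccEquiv K 2 (linearForm c) ∈ _
  rw [finSuccEquiv_linearForm, hu, map_mul, mul_comm (Polynomial.C (vanishingForm w))]
  exact Ideal.mem_span_pair.mpr ⟨_, _, rfl⟩

end PointIdeal

section LowerBound

variable {K : Type*} [Field K]

lemma exists_basis_dual_eq_mul_repr_zero {V : Type*} [AddCommGroup V] [Module K V] {n : ℕ}
    (hV : Module.finrank K V = n + 1) {φ : Module.Dual K V} {p : V} (hp : φ p ≠ 0) :
    ∃ b : Module.Basis (Fin (n + 1)) K V, b 0 = p ∧ ∀ v, φ v = φ p * b.repr v 0 := by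
  have : Module.Finite K V := Module.finite_of_finrank_eq_succ hV
  have hφ : φ ≠ 0 := fun h => hp (by rw [h, LinearMap.zero_apply])
  have hker : Module.finrank K (LinearMap.ker φ) = n := by
    have := Module.Dual.finrank_ker_add_one_of_ne_zero hφ
    omega
  let b : Module.Basis (Fin (n + 1)) K V :=
    Module.Basis.mkFinCons p (Module.finBasisOfFinrankEq K (LinearMap.ker φ) hker)
      (fun c x hx hcx => by simpa [LinearMap.mem_ker.mp hx, hp] using congrArg φ hcx)
      (fun z => ⟨-(φ z / φ p), by simp [hp]⟩)
  have hb0 : b 0 = p := by simp [b]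
  have hbsucc (i : Fin n) : φ (b i.succ) = 0 := by simp [b]
  refine ⟨b, hb0, fun v => ?_⟩
  have hcoord : φ = φ p • b.coord 0 := by
    refine b.ext fun i => ?_
    cases i using Fin.cases with
    | zero => simp [← hb0]
    | succ i => simp [hbsucc]
  exact LinearMap.congr_fun hcoord v

lemma mul_add_le_of_le_sub {n a b d j : ℕ} (hjd : j ≤ d) (ha : a ≤ d - j)
    (hb : n * (b - j) ≤ d - j) : n * (a + b) ≤ n * d + a := by
  obtain ⟨e, rfl⟩ := Nat.exists_eq_add_of_le hjd
  rw [Nat.add_sub_cancel_left] at ha hb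
  rcases n with _ | n
  · simp
  · have hbj : (n + 1) * b ≤ (n + 1) * (b - j) + (n + 1) * j := by
      rw [← Nat.mul_add]
      exact Nat.mul_le_mul_left _ (by omega)
    have hna : n * a ≤ n * e := Nat.mul_le_mul_left n ha
    linarith

lemma card_mul_add_le_of_mem_pointIdeal_pow_coord {ι : Type*} [Fintype ι] {w : ι → Fin 2 → K}
    (hw0 : ∀ i, w i ≠ 0) (hw : Pairwise fun i j => LinearIndependent K ![w i, w j])
    {f : MvPolynomial (Fin 3) K} {a b d : ℕ} (hf0 : f ≠ 0) (hf : f.IsHomogeneous d)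
    (hp : f ∈ pointIdeal (Pi.single 0 1) ^ a) (hq : ∀ i, f ∈ pointIdeal (Fin.cons 0 (w i)) ^ b) :
    Fintype.card ι * (a + b) ≤ Fintype.card ι * d + a := by
  set j := (finSuccEquiv K 2 f).natDegree
  set g := (finSuccEquiv K 2 f).coeff j
  have hg0 : g ≠ 0 := Polynomial.leadingCoeff_ne_zero.mpr (by simpa using hf0)
  have hjd : j ≤ d := calc
    j = f.degreeOf 0 := natDegree_finSuccEquiv f
    _ ≤ f.totalDegree := degreeOf_le_totalDegree f 0
    _ = d := hf.totalDegree hf0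
  have hg : g.IsHomogeneous (d - j) :=
    hf.finSuccEquiv_coeff_isHomogeneous j (d - j) (Nat.add_sub_of_le hjd)
  have ha : a ≤ d - j :=
    le_of_mem_idealOfVars_pow (coeff_finSuccEquiv_mem_idealOfVars_pow hp j) hg0 hg
  have hb : Fintype.card ι * (b - j) ≤ d - j := by
    simpa using sum_le_of_isRelPrime_of_dvd (s := Finset.univ)
      (fun i _ => (isHomogeneous_linearForm ![w i 1, -w i 0]).pow (b - j))
      (fun i _ i' _ hne => (isRelPrime_vanishingForm (hw hne)).pow)
      (fun i _ => vanishingForm_pow_dvd_coeff_finSuccEquiv (hw0 i) (hq i) j) hg0 hg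
  exact mul_add_le_of_le_sub hjd ha hb

lemma linearIndependent_tail_pair {n : ℕ} {v v' : Fin (n + 1) → K} (hv : v 0 = 0) (hv' : v' 0 = 0)
    (h : LinearIndependent K ![v, v']) : LinearIndependent K ![Fin.tail v, Fin.tail v'] := by
  rw [LinearIndependent.pair_iff] at h ⊢
  intro s t hst
  refine h s t (funext fun i => ?_)
  cases i using Fin.cases with
  | zero => simp [hv, hv']
  | succ i => exact congrFun hst i

theorem card_mul_add_le_of_mem_pointIdeal_pow {ι : Type*} [Fintype ι] {c p : Fin 3 → K}
    {q : ι → Fin 3 → K} (hp : c ⬝ᵥ p ≠ 0) (hq : ∀ i, c ⬝ᵥ q i = 0) (hq0 : ∀ i, q i ≠ 0)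
    (hqq : Pairwise fun i j => LinearIndependent K ![q i, q j])
    {f : MvPolynomial (Fin 3) K} {a b d : ℕ} (hf0 : f ≠ 0) (hf : f.IsHomogeneous d)
    (hfp : f ∈ pointIdeal p ^ a) (hfq : ∀ i, f ∈ pointIdeal (q i) ^ b) :
    Fintype.card ι * (a + b) ≤ Fintype.card ι * d + a := by
  obtain ⟨B, hBp, hB⟩ := exists_basis_dual_eq_mul_repr_zero (n := 2) (by simp)
    (φ := dotProductBilin K K c) hp
  let e : (Fin 3 → K) ≃ₗ[K] (Fin 3 → K) := B.equivFun
  have hep : e.symm (Pi.single 0 1) = p := by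
    simp [e, Module.Basis.equivFun_symm_apply, hBp]
  have heq (i : ι) : e (q i) 0 = 0 :=
    (mul_eq_zero.mp ((hB (q i)).symm.trans (hq i))).resolve_left hp
  have hcons (i : ι) : Fin.cons 0 (Fin.tail (e (q i))) = e (q i) := by
    rw [← heq i, Fin.cons_self_tail]
  refine card_mul_add_le_of_mem_pointIdeal_pow_coord (w := fun i => Fin.tail (e (q i)))
    (f := linearSubst e.symm.toLinearMap f) (fun i hi => hq0 i ?_) (fun i j hij => ?_) ?_
    (isHomogeneous_linearSubst _ hf) (linearSubst_mem_pointIdeal_pow ?_)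
    (fun i => linearSubst_mem_pointIdeal_pow ?_)
  · rw [← e.map_eq_zero_iff, ← hcons i, hi]
    exact Matrix.cons_zero_zero
  · apply linearIndependent_tail_pair (heq i) (heq j)
    have hcomp : e ∘ ![q i, q j] = ![e (q i), e (q j)] :=
      (FinVec.map_eq _ _).symm
    exact hcomp ▸ (hqq hij).map' e.toLinearMap e.ker
  · exact (map_ne_zero_iff _ (linearSubst_injective e.symm)).mpr hf0
  · rwa [LinearEquiv.coe_coe, hep]
  · rw [hcons, LinearEquiv.coe_coe, e.symm_apply_apply]
    exact hfq i

end LowerBound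

section UpperBound

variable {K : Type*} [Field K] {ι : Type*} [Fintype ι]

lemma exists_isHomogeneous_mem_pointIdeal_pow {c p : Fin 3 → K} {q : ι → Fin 3 → K} (hc : c ≠ 0)
    (hq : ∀ i, c ⬝ᵥ q i = 0) (hpq : ∀ i, LinearIndependent K ![p, q i]) (s m : ℕ) :
    ∃ f : MvPolynomial (Fin 3) K, f ≠ 0 ∧ f.IsHomogeneous (s + Fintype.card ι * m) ∧
      f ∈ pointIdeal p ^ (Fintype.card ι * m) ∧ ∀ i, f ∈ pointIdeal (q i) ^ (s + m) := by
  let join (i : ι) := linearForm (crossProduct p (q i))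
  have join_ne_zero (i : ι) : join i ≠ 0 :=
    (map_ne_zero_iff _ linearForm_injective).mpr
      (crossProduct_ne_zero_iff_linearIndependent.mpr (hpq i))
  have join_mem_left (i : ι) : join i ∈ pointIdeal p :=
    linearForm_mem_pointIdeal (by rw [dotProduct_comm, dot_self_cross])
  have join_mem_right (i : ι) : join i ∈ pointIdeal (q i) :=
    linearForm_mem_pointIdeal (by rw [dotProduct_comm, dot_cross_self])
  refine ⟨linearForm c ^ s * ∏ i, join i ^ m, ?_, ?_, ?_, fun i => ?_⟩
  · exact mul_ne_zero (pow_ne_zero _ ((map_ne_zero_iff _ linearForm_injective).mpr hc))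
      (Finset.prod_ne_zero_iff.mpr fun i _ => pow_ne_zero _ (join_ne_zero i))
  · simpa using ((isHomogeneous_linearForm c).pow s).mul
      (IsHomogeneous.prod Finset.univ _ _ fun i _ => (isHomogeneous_linearForm _).pow m)
  · refine Ideal.mul_mem_left _ _ ?_
    simpa [← pow_mul, mul_comm] using
      Ideal.prod_mem_prod fun i (_ : i ∈ Finset.univ) => Ideal.pow_mem_pow (join_mem_left i) m
  · have hprod : ∏ j, join j ^ m ∈ pointIdeal (q i) ^ m :=
      Ideal.mem_of_dvd _ (Finset.dvd_prod_of_mem _ (Finset.mem_univ i))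
        (Ideal.pow_mem_pow (join_mem_right i) m)
    rw [pow_add]
    exact Ideal.mul_mem_mul (Ideal.pow_mem_pow (linearForm_mem_pointIdeal (hq i)) s) hprod

end UpperBound

section Waldschmidt

lemma iInf_alpha_div_eq {σ K : Type*} [Field K] {I : ℕ → Ideal (MvPolynomial σ K)}
    {F : MvPolynomial σ K} {n D : ℕ} (hn : n ≠ 0) (hF0 : F ≠ 0) (hF : F.IsHomogeneous D)
    (hFn : F ∈ I n) (hFpow : ∀ k, F ^ k ∈ I k)
    (hle : ∀ k d f, f ∈ I k → f ≠ 0 → f.IsHomogeneous d → D * k ≤ n * d) :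
    (⨅ k : ℕ+, (alpha (I k) : ℝ) / ((k : ℕ) : ℝ)) = D / n := by
  have hn' : (0 : ℝ) < n := by positivity
  apply le_antisymm
  · have hbdd : BddBelow (Set.range fun k : ℕ+ => (alpha (I k) : ℝ) / ((k : ℕ) : ℝ)) :=
      ⟨0, by rintro _ ⟨k, rfl⟩; positivity⟩
    have hα : alpha (I n) ≤ D := Nat.sInf_le ⟨F, hFn, hF0, hF⟩
    calc (⨅ k : ℕ+, (alpha (I k) : ℝ) / ((k : ℕ) : ℝ)) ≤ alpha (I n) / n :=
          ciInf_le hbdd ⟨n, Nat.pos_of_ne_zero hn⟩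
      _ ≤ D / n := by gcongr
  · refine le_ciInf fun k => ?_
    have hne : {d : ℕ | ∃ f ∈ I k, f ≠ 0 ∧ f.IsHomogeneous d}.Nonempty :=
      ⟨D * k, F ^ (k : ℕ), hFpow k, pow_ne_zero _ hF0, hF.pow k⟩
    obtain ⟨f, hfI, hf0, hf⟩ := Nat.sInf_mem hne
    have hα : D * (k : ℕ) ≤ n * alpha (I k) := hle k _ f hfI hf0 hf
    rw [div_le_div_iff₀ hn' (by positivity), mul_comm (alpha (I k) : ℝ)]
    exact_mod_cast hα

lemma pow_mem_pow_of_mem_pow {A : Type*} [CommSemiring A] {I : Ideal A} {x : A} {n k l : ℕ}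
    (hx : x ∈ I ^ n) (hl : l ≤ n * k) : x ^ k ∈ I ^ l :=
  Ideal.pow_le_pow_right hl (pow_mul I n k ▸ Ideal.pow_mem_pow hx k)

variable {K : Type*} [Field K]

lemma projEq_symm {p q : Fin 3 → K} (h : projEq p q) : projEq q p := by
  obtain ⟨c, hc, rfl⟩ := h
  exact ⟨c⁻¹, inv_ne_zero hc, (inv_smul_smul₀ hc p).symm⟩

lemma linearIndependent_pair_of_not_projEq {p q : Fin 3 → K} (hp : p ≠ 0) (hq : q ≠ 0)
    (h : ¬ projEq p q) : LinearIndependent K ![p, q] := by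
  rw [LinearIndependent.pair_iff' hp]
  rintro c rfl
  exact h ⟨c, left_ne_zero_of_smul hq, rfl⟩

lemma linearIndependent_pair_of_dotProduct {c p q : Fin 3 → K} (hp : c ⬝ᵥ p ≠ 0)
    (hq : c ⬝ᵥ q = 0) (hq0 : q ≠ 0) : LinearIndependent K ![p, q] := by
  have hp0 : p ≠ 0 := by rintro rfl; simp at hp
  rw [LinearIndependent.pair_iff' hp0]
  rintro a rfl
  have ha : a ≠ 0 := left_ne_zero_of_smul hq0
  simp [ha, hp] at hq

theorem waldschmidt_double_point_off_line_three_points_general {ι : Type*} [Fintype ι]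
    [Nonempty ι] {ℓ : MvPolynomial (Fin 3) K} (hℓ : ℓ.IsHomogeneous 1) {p : Fin 3 → K}
    {q : ι → Fin 3 → K} (hp : eval p ℓ ≠ 0) (hq : ∀ i, eval (q i) ℓ = 0) (hq0 : ∀ i, q i ≠ 0)
    (hqq : Pairwise fun i j => ¬ projEq (q i) (q j)) {m : ℕ} (hm : m ≤ Fintype.card ι) :
    (⨅ k : ℕ+, (alpha (pointIdeal p ^ (m * (k : ℕ)) ⊓ ⨅ i, pointIdeal (q i) ^ (k : ℕ)) : ℝ) /
        ((k : ℕ) : ℝ)) =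
      (m * Fintype.card ι + Fintype.card ι - m) / Fintype.card ι := by
  obtain ⟨c, rfl⟩ := exists_linearForm_eq hℓ
  simp only [eval_linearForm] at hp hq
  have hc : c ≠ 0 := by rintro rfl; simp at hp
  have hn : 0 < Fintype.card ι := Fintype.card_pos
  obtain ⟨s, hs⟩ := Nat.exists_eq_add_of_le' hm
  obtain ⟨F, hF0, hF, hFp, hFq⟩ := exists_isHomogeneous_mem_pointIdeal_pow hc hq
    (fun i => linearIndependent_pair_of_dotProduct hp (hq i) (hq0 i)) s m
  rw [← hs] at hFq
  have hlower (k d : ℕ) (f : MvPolynomial (Fin 3) K)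
      (hf : f ∈ pointIdeal p ^ (m * k) ⊓ ⨅ i, pointIdeal (q i) ^ k) (hf0 : f ≠ 0)
      (hfd : f.IsHomogeneous d) : (s + Fintype.card ι * m) * k ≤ Fintype.card ι * d := by
    have hbound := card_mul_add_le_of_mem_pointIdeal_pow hp hq hq0 (fun i j hij =>
      linearIndependent_pair_of_not_projEq (hq0 i) (hq0 j) (hqq hij)) hf0 hfd hf.1
      (Ideal.mem_iInf.mp hf.2)
    have hcard : Fintype.card ι * k = s * k + m * k := by rw [hs, add_mul]
    linarith
  have hpow (k : ℕ) : F ^ k ∈ pointIdeal p ^ (m * k) ⊓ ⨅ i, pointIdeal (q i) ^ k :=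
    ⟨pow_mem_pow_of_mem_pow hFp (Nat.mul_le_mul_right k (Nat.le_mul_of_pos_left m hn)),
      Ideal.mem_iInf.mpr fun i => pow_mem_pow_of_mem_pow (hFq i) (Nat.le_mul_of_pos_left k hn)⟩
  rw [iInf_alpha_div_eq (I := fun k => pointIdeal p ^ (m * k) ⊓ ⨅ i, pointIdeal (q i) ^ k) hn.ne'
    hF0 hF ⟨mul_comm m _ ▸ hFp, Ideal.mem_iInf.mpr hFq⟩ hpow hlower, hs]
  push_cast
  ring

lemma pairwise_not_projEq_vec_three {p q r : Fin 3 → K} (hpq : ¬ projEq p q)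
    (hpr : ¬ projEq p r) (hqr : ¬ projEq q r) :
    Pairwise fun i j => ¬ projEq (![p, q, r] i) (![p, q, r] j) := by
  have hsymm : Std.Symm fun i j => ¬ projEq (![p, q, r] i) (![p, q, r] j) :=
    ⟨fun _ _ h h' => h (projEq_symm h')⟩
  rw [pairwise_iff_lt]
  simp [Fin.forall_fin_succ, hpq, hpr, hqr]

lemma iInf_fin_three {L : Type*} [CompleteLattice L] (f : Fin 3 → L) :
    ⨅ i, f i = f 0 ⊓ f 1 ⊓ f 2 :=
  eq_of_forall_le_iff fun x => by simp [Fin.forall_fin_succ, and_assoc]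

end Waldschmidt

/-- Let `L = {ℓ = 0}` be a line of `ℙ²`, let `p₂, p₃, p₄` be three
distinct points of `L`, and let `p₁` be a point not on `L`.  Let `Z = 2p₁ + p₂ + p₃ + p₄`.
Then the Waldschmidt constant of `I(Z)` equals `7/3`. -/
theorem waldschmidt_double_point_off_line_three_points
    {kk : Type*} [Field kk] [IsAlgClosed kk]
    (ℓ : MvPolynomial (Fin 3) kk) (hl0 : ℓ ≠ 0) (hl1 : ℓ.IsHomogeneous 1)
    (p₁ p₂ p₃ p₄ : Fin 3 → kk)
    (hp10 : p₁ ≠ 0) (hp20 : p₂ ≠ 0) (hp30 : p₃ ≠ 0) (hp40 : p₄ ≠ 0)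
    (hoff : MvPolynomial.eval p₁ ℓ ≠ 0)
    (hon2 : MvPolynomial.eval p₂ ℓ = 0) (hon3 : MvPolynomial.eval p₃ ℓ = 0)
    (hon4 : MvPolynomial.eval p₄ ℓ = 0)
    (hp23 : ¬ projEq p₂ p₃) (hp24 : ¬ projEq p₂ p₄) (hp34 : ¬ projEq p₃ p₄) :
    (⨅ k : ℕ+, (alpha (pointIdeal p₁ ^ (2 * (k : ℕ)) ⊓ pointIdeal p₂ ^ (k : ℕ) ⊓
        pointIdeal p₃ ^ (k : ℕ) ⊓ pointIdeal p₄ ^ (k : ℕ)) : ℝ) / ((k : ℕ) : ℝ))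
      = 7 / 3 := by
  have h := waldschmidt_double_point_off_line_three_points_general hl1 (q := ![p₂, p₃, p₄]) hoff
    (by simp [Fin.forall_fin_succ, hon2, hon3, hon4])
    (by simp [Fin.forall_fin_succ, hp20, hp30, hp40])
    (pairwise_not_projEq_vec_three hp23 hp24 hp34) (m := 2) (by simp)
  simp only [iInf_fin_three, ← inf_assoc] at h
  exact h.trans (by norm_num)
end
end

section
/- Let L_1 and L_2 be two distinct lines in P^2 meeting at a point p_0, let r, s ≥ 1, let p_1,…,p_r be distinct points of L_1 \ {p_0} and p_{r+1},…,p_{r+s} be distinct points of L_2 \ {p_0}, and let Z = 2p_0 + p_1 + ⋯ + p_{r+s} be the fat points scheme with a double point at p_0 and simple points at p_1,…,p_{r+s}. Then the Waldschmidt constant of I(Z) equals 2. -/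
noncomputable section

open MvPolynomial

/-!
A nonzero form in the `n`-th power of the ideal of a point has degree at least `n`, because that
ideal lies in the irrelevant ideal. So the point `2p₀` alone forces `α(I(Z)⁽ᵏ⁾) ≥ 2k`, and
`(ℓ₁ℓ₂)ᵏ`, which has multiplicity `2k` at `p₀` and at least `k` at all the other points, attains
this bound.
-/

theorem mem_pow_idealOfVars_iff_of_isHomogeneous {R σ : Type*} [CommSemiring R]
    {f : MvPolynomial σ R} {d : ℕ} (hf : f.IsHomogeneous d) (hf0 : f ≠ 0) (n : ℕ) :
    f ∈ idealOfVars σ R ^ n ↔ n ≤ d := by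
  have degree_eq : ∀ x ∈ f.support, x.degree = d := fun x hx =>
    not_imp_comm.1 hf.coeff_eq_zero (mem_support_iff.1 hx)
  rw [mem_pow_idealOfVars_iff]
  constructor
  · intro h
    obtain ⟨x, hx⟩ := support_nonempty.2 hf0
    exact degree_eq x hx ▸ h x hx
  · exact fun hn x hx => (degree_eq x hx).symm ▸ hn

section InitialDegree

variable {kk σ : Type*} [Field kk] {f : MvPolynomial σ kk} {d : ℕ}

theorem alpha_eq_of_le_pow_idealOfVars {J : Ideal (MvPolynomial σ kk)}
    (hJ : J ≤ idealOfVars σ kk ^ d) (hfJ : f ∈ J) (hf0 : f ≠ 0) (hf : f.IsHomogeneous d) :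
    alpha J = d := by
  refine IsLeast.csInf_eq ⟨⟨f, hfJ, hf0, hf⟩, ?_⟩
  rintro e ⟨g, hgJ, hg0, hg⟩
  exact (mem_pow_idealOfVars_iff_of_isHomogeneous hg hg0 d).1 (hJ hgJ)

theorem iInf_alpha_div_eq_of_le_pow_idealOfVars {J : ℕ → Ideal (MvPolynomial σ kk)}
    (hJ : ∀ k, J k ≤ idealOfVars σ kk ^ (d * k)) (hfJ : ∀ k, f ^ k ∈ J k) (hf0 : f ≠ 0)
    (hf : f.IsHomogeneous d) :
    (⨅ k : ℕ+, (alpha (J k) : ℝ) / ((k : ℕ) : ℝ)) = d := by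
  have alpha_div_eq (k : ℕ+) : (alpha (J k) : ℝ) / ((k : ℕ) : ℝ) = d := by
    rw [alpha_eq_of_le_pow_idealOfVars (hJ k) (hfJ k) (pow_ne_zero _ hf0) (hf.pow k),
      Nat.cast_mul, mul_div_cancel_right₀ _ (Nat.cast_ne_zero.2 k.ne_zero)]
  simp only [alpha_div_eq, ciInf_const]

end InitialDegree

section PointIdeal

variable {kk : Type*} [Field kk]

theorem mem_pointIdeal_of_isHomogeneous_one {ℓ : MvPolynomial (Fin 3) kk}
    {p : Fin 3 → kk} (hℓ : ℓ.IsHomogeneous 1) (hp : eval p ℓ = 0) : ℓ ∈ pointIdeal p :=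
  Ideal.subset_span ⟨hℓ, hp⟩

theorem pointIdeal_le_idealOfVars (p : Fin 3 → kk) :
    pointIdeal p ≤ idealOfVars (Fin 3) kk := by
  refine Ideal.span_le.2 ?_
  rintro ℓ ⟨hℓ, -⟩
  rcases eq_or_ne ℓ 0 with rfl | hℓ0
  · exact zero_mem _
  · exact pow_one (idealOfVars (Fin 3) kk) ▸
      (mem_pow_idealOfVars_iff_of_isHomogeneous hℓ hℓ0 1).2 le_rfl

theorem waldschmidt_double_intersection_point_general {ι κ : Type*}
    {ℓ₁ ℓ₂ : MvPolynomial (Fin 3) kk} (hℓ₁ : ℓ₁ ≠ 0) (hℓ₂ : ℓ₂ ≠ 0)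
    (hd₁ : ℓ₁.IsHomogeneous 1) (hd₂ : ℓ₂.IsHomogeneous 1) {p₀ : Fin 3 → kk}
    (hp₀₁ : eval p₀ ℓ₁ = 0) (hp₀₂ : eval p₀ ℓ₂ = 0)
    {p : ι → Fin 3 → kk} (hp : ∀ i, eval (p i) ℓ₁ = 0)
    {p' : κ → Fin 3 → kk} (hp' : ∀ i, eval (p' i) ℓ₂ = 0) :
    (⨅ k : ℕ+, (alpha (pointIdeal p₀ ^ (2 * (k : ℕ)) ⊓
        (⨅ i, pointIdeal (p i) ^ (k : ℕ)) ⊓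
        ⨅ i, pointIdeal (p' i) ^ (k : ℕ)) : ℝ) / ((k : ℕ) : ℝ)) = 2 := by
  have mem_sq : ℓ₁ * ℓ₂ ∈ pointIdeal p₀ ^ 2 := sq (pointIdeal p₀) ▸ Ideal.mul_mem_mul
    (mem_pointIdeal_of_isHomogeneous_one hd₁ hp₀₁) (mem_pointIdeal_of_isHomogeneous_one hd₂ hp₀₂)
  have mem_left (i : ι) : ℓ₁ * ℓ₂ ∈ pointIdeal (p i) :=
    Ideal.mul_mem_right _ _ (mem_pointIdeal_of_isHomogeneous_one hd₁ (hp i))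
  have mem_right (i : κ) : ℓ₁ * ℓ₂ ∈ pointIdeal (p' i) :=
    Ideal.mul_mem_left _ _ (mem_pointIdeal_of_isHomogeneous_one hd₂ (hp' i))
  refine iInf_alpha_div_eq_of_le_pow_idealOfVars (d := 2) (f := ℓ₁ * ℓ₂)
    (J := fun k => pointIdeal p₀ ^ (2 * k) ⊓ (⨅ i, pointIdeal (p i) ^ k) ⊓
      ⨅ i, pointIdeal (p' i) ^ k)
    (fun k => ?_) (fun k => ?_) (mul_ne_zero hℓ₁ hℓ₂) (hd₁.mul hd₂)
  · exact (inf_le_left.trans inf_le_left).trans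
      (Ideal.pow_right_mono (pointIdeal_le_idealOfVars p₀) _)
  · refine ⟨⟨?_, ?_⟩, ?_⟩
    · exact pow_mul (pointIdeal p₀) 2 k ▸ Ideal.pow_mem_pow mem_sq k
    · exact Ideal.mem_iInf.2 fun i => Ideal.pow_mem_pow (mem_left i) k
    · exact Ideal.mem_iInf.2 fun i => Ideal.pow_mem_pow (mem_right i) k

end PointIdeal

/-- Let `L₁ = {ℓ₁ = 0}` and `L₂ = {ℓ₂ = 0}` be two distinct lines of `ℙ²`
meeting at the point `p₀`, let `r, s ≥ 1`, let `p 1, …, p r` be distinct points of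
`L₁ \ {p₀}` and `p' 1, …, p' s` distinct points of `L₂ \ {p₀}`, and let
`Z = 2p₀ + p_1 + ⋯ + p_r + p'_1 + ⋯ + p'_s`.  Then the Waldschmidt constant of `I(Z)`
equals `2`. -/
theorem waldschmidt_double_intersection_point
    {kk : Type*} [Field kk] [IsAlgClosed kk]
    (ℓ₁ ℓ₂ : MvPolynomial (Fin 3) kk)
    (hl1 : ℓ₁ ≠ 0) (hl2 : ℓ₂ ≠ 0)
    (hd1 : ℓ₁.IsHomogeneous 1) (hd2 : ℓ₂.IsHomogeneous 1)
    (hne : ¬ ∃ c : kk, c ≠ 0 ∧ ℓ₂ = c • ℓ₁)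
    (p₀ : Fin 3 → kk) (hp00 : p₀ ≠ 0)
    (hp01 : MvPolynomial.eval p₀ ℓ₁ = 0) (hp02 : MvPolynomial.eval p₀ ℓ₂ = 0)
    (r s : ℕ) (hr : 1 ≤ r) (hs : 1 ≤ s)
    (p : Fin r → (Fin 3 → kk)) (hp0 : ∀ i, p i ≠ 0)
    (hpL : ∀ i, MvPolynomial.eval (p i) ℓ₁ = 0)
    (hpq : ∀ i, ¬ projEq (p i) p₀)
    (hpdist : ∀ i j, i ≠ j → ¬ projEq (p i) (p j))
    (p' : Fin s → (Fin 3 → kk)) (hp'0 : ∀ i, p' i ≠ 0)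
    (hp'L : ∀ i, MvPolynomial.eval (p' i) ℓ₂ = 0)
    (hp'q : ∀ i, ¬ projEq (p' i) p₀)
    (hp'dist : ∀ i j, i ≠ j → ¬ projEq (p' i) (p' j)) :
    (⨅ k : ℕ+, (alpha (pointIdeal p₀ ^ (2 * (k : ℕ)) ⊓
        (⨅ i : Fin r, pointIdeal (p i) ^ (k : ℕ)) ⊓
        ⨅ i : Fin s, pointIdeal (p' i) ^ (k : ℕ)) : ℝ) / ((k : ℕ) : ℝ)) = 2 := by
  exact waldschmidt_double_intersection_point_general hl1 hl2 hd1 hd2 hp01 hp02 hpL hp'L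
end
end
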